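/- Let p_{n−1} be a monic polynomial of degree n−1 with all zeros in the open unit disk 𝔻, let η ∈ 𝕋, and set p_n(z) = z p_{n−1}(z). Then η p_n* + p_n and η p_n* − p_n have all their zeros on the unit circle, these zeros are simple, the zeros of η p_n* − p_n and of η p_n* + p_n strictly interlace on the circle, and if e^{iφ₁},…,e^{iφ_n} (0 ≤ φ₁ < ⋯ < φ_n < 2π) are the zeros of η p_n* + p_n other than the origin's contribution, then μ_s := (η p_n* − p_n)(e^{iφ_s}) / (2i · d/dφ[(p_n + η p_n*)(e^{iφ})]|_{φ=φ_s}) is a positive real number for each s = 1,…,n. -/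

import Mathlib

/-!
On the unit circle `P*(z) = z ^ n * conj (P z)`, so `P = e^{iψ} η P*` there for a real phase `ψ`,
and `η P* ± P = η P* (1 ± e^{iψ})`, where `η P*` has no zero on the circle. Up to a constant, `ψ`
is the sum over the zeros `a` of `P` of the phases of the Blaschke factors
`(z - a) / (1 - conj a * z)`; each of these has the Poisson kernel at `a` as its derivative and
grows by `2π` over one turn. Hence `ψ` is strictly increasing and grows by `2πn` over one turn, so
that it meets exactly `2n` successive multiples of `π`. The odd ones give zeros of `η P* + P` and
the even ones zeros of `η P* - P`; as both polynomials have degree at most `n`, these are all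
their zeros and they are simple. At an odd multiple the quotient `μ` is `1 / ψ'`.
-/

open Polynomial Real

/-- The reversed polynomial `P*(z) = z^n conj(P(1/conj z))` at degree `n`. -/
noncomputable def pstar (n : ℕ) (P : Polynomial ℂ) : Polynomial ℂ :=
  Polynomial.reflect n (P.map (starRingEnd ℂ))

open scoped ComplexConjugate

lemma norm_exp_I_mul_ofReal (φ : ℝ) : ‖Complex.exp (Complex.I * φ)‖ = 1 := by
  rw [mul_comm, Complex.norm_exp_ofReal_mul_I]

lemma mul_conj_eq_one_of_norm_eq_one {z : ℂ} (hz : ‖z‖ = 1) : z * conj z = 1 := by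
  rw [Complex.mul_conj', hz, Complex.ofReal_one, one_pow]

lemma injective_exp_I_mul_ofReal {ι : Type*} {θ : ι → ℝ} (hθ : Function.Injective θ) {a b : ℝ}
    (hab : b - a ≤ 2 * π) (hI : ∀ i, θ i ∈ Set.Ico a b) :
    Function.Injective fun i ↦ Complex.exp (Complex.I * θ i) := by
  intro i j hij
  refine hθ (Circle.exp_injOn_Ico hab (hI i) (hI j) (Circle.ext ?_))
  simpa only [Circle.coe_exp, mul_comm] using hij

lemma hasDerivAt_exp_I_mul_ofReal {f : ℝ → ℝ} {f' x : ℝ} (hf : HasDerivAt f f' x) :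
    HasDerivAt (fun t ↦ Complex.exp (Complex.I * f t))
      (Complex.exp (Complex.I * f x) * (Complex.I * f')) x :=
  (hf.ofReal_comp.const_mul Complex.I).cexp

lemma eq_exp_two_mul_arg_mul_conj (c : ℂ) :
    c = Complex.exp (Complex.I * (2 * c.arg : ℝ)) * conj c := by
  have hconj : conj c = ‖c‖ * Complex.exp (-(c.arg * Complex.I)) := by
    conv_lhs => rw [← c.norm_mul_exp_arg_mul_I]
    rw [map_mul, Complex.conj_ofReal, ← Complex.exp_conj, map_mul, Complex.conj_ofReal,
      Complex.conj_I, mul_neg]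
  rw [hconj, mul_left_comm, ← Complex.exp_add]
  conv_lhs => rw [← c.norm_mul_exp_arg_mul_I]
  push_cast
  ring_nf

/-- A lift to `ℝ` of the argument of the Blaschke factor `(z - a) / (1 - conj a * z)` at
`z = e^{iφ}`. For `‖a‖ < 1` the number `1 - conj a * z` has positive real part, so its principal
argument is smooth in `φ`. -/
noncomputable def blaschkePhase (a : ℂ) (φ : ℝ) : ℝ :=
  φ - 2 * (1 - conj a * Complex.exp (Complex.I * φ)).arg

lemma exp_sub_eq_exp_blaschkePhase_mul (a : ℂ) (φ : ℝ) :
    Complex.exp (Complex.I * φ) - a = Complex.exp (Complex.I * blaschkePhase a φ) *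
      (Complex.exp (Complex.I * φ) * conj (Complex.exp (Complex.I * φ) - a)) := by
  set z := Complex.exp (Complex.I * φ) with hz
  set u := 1 - conj a * z with hu
  have hzz : z * conj z = 1 :=
    mul_conj_eq_one_of_norm_eq_one (norm_exp_I_mul_ofReal φ)
  have hu_eq : z * conj (z - a) = u := by
    rw [map_sub, mul_sub, hzz, mul_comm z]
  have hconj_u : z * conj u = z - a := by
    rw [hu, map_sub, map_mul, Complex.conj_conj, map_one]
    linear_combination -a * hzz
  calc z - a = z * conj u := hconj_u.symm
    _ = Complex.exp (Complex.I * blaschkePhase a φ) *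
          (Complex.exp (Complex.I * (2 * u.arg : ℝ)) * conj u) := by
        rw [← mul_assoc, ← Complex.exp_add, blaschkePhase, ← hz, ← hu, ← mul_add,
          ← Complex.ofReal_add, sub_add_cancel]
    _ = Complex.exp (Complex.I * blaschkePhase a φ) * (z * conj (z - a)) := by
        rw [← eq_exp_two_mul_arg_mul_conj, hu_eq]

lemma blaschkePhase_add_two_pi (a : ℂ) (φ : ℝ) :
    blaschkePhase a (φ + 2 * π) = blaschkePhase a φ + 2 * π := by
  have hexp : Complex.exp (Complex.I * (φ + 2 * π : ℝ)) = Complex.exp (Complex.I * φ) := by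
    rw [Complex.exp_eq_exp_iff_exists_int]
    exact ⟨1, by push_cast; ring⟩
  rw [blaschkePhase, blaschkePhase, hexp]
  ring

lemma hasDerivAt_blaschkePhase {a : ℂ} (ha : ‖a‖ < 1) (φ : ℝ) :
    HasDerivAt (blaschkePhase a) (poissonKernel 0 a (Complex.exp (Complex.I * φ))) φ := by
  set z := Complex.exp (Complex.I * φ) with hz
  have hzz : z * conj z = 1 :=
    mul_conj_eq_one_of_norm_eq_one (norm_exp_I_mul_ofReal φ)
  have hre : 0 < (1 - conj a * z).re := by
    have hle := Complex.re_le_norm (conj a * z)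
    rw [norm_mul, RCLike.norm_conj, norm_exp_I_mul_ofReal, mul_one] at hle
    rw [Complex.sub_re, Complex.one_re]
    linarith
  have hu0 : 1 - conj a * z ≠ 0 := fun h ↦ by simp [h] at hre
  have hza : z - a ≠ 0 := fun h ↦ hu0 (by
    rw [sub_eq_zero] at h; rw [← h, mul_comm, hzz, sub_self])
  have harg : HasDerivAt (fun t : ℝ ↦ (1 - conj a * Complex.exp (Complex.I * t)).arg)
      (-(conj a * (z * (Complex.I * (1 : ℝ)))) / (1 - conj a * z)).im φ := by
    have hu := ((hasDerivAt_exp_I_mul_ofReal (hasDerivAt_id φ)).const_mul (conj a)).const_sub 1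
    have him := Complex.imCLM.hasFDerivAt.comp_hasDerivAt φ (hu.clog_real (Or.inl hre))
    simpa only [Function.comp_def, id_eq, Complex.imCLM_apply, Complex.log_im, ← hz] using him
  refine ((hasDerivAt_id φ).sub (harg.const_mul 2)).congr_deriv ?_
  have hker : conj ((z + a) / (z - a)) = 1 + 2 * (conj a * z / (1 - conj a * z)) := by
    have hconj : conj z - conj a ≠ 0 := by rwa [← map_sub, _root_.map_ne_zero]
    rw [map_div₀, map_add, map_sub]
    field_simp
    linear_combination (-2 * conj a) * hzz
  have him : -(conj a * (z * (Complex.I * (1 : ℝ)))) / (1 - conj a * z) =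
      -((conj a * z / (1 - conj a * z)) * Complex.I) := by
    push_cast; ring
  rw [poissonKernel_eq_re_herglotzRieszKernel, Function.comp_apply, herglotzRieszKernel,
    sub_zero, sub_zero, ← Complex.conj_re, hker, him, Complex.neg_im, Complex.mul_I_im]
  simp

lemma poissonKernel_zero_pos {a z : ℂ} (h : ‖a‖ < ‖z‖) : 0 < poissonKernel 0 a z := by
  have hza : z - a ≠ 0 := fun h0 ↦ h.ne' (by rw [sub_eq_zero.mp h0])
  rw [poissonKernel_def, sub_zero, sub_zero]
  have := norm_nonneg a
  exact div_pos (by nlinarith) (by positivity)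

lemma natDegree_pstar_le {n : ℕ} {P : ℂ[X]} (hP : P.natDegree ≤ n) :
    (pstar n P).natDegree ≤ n :=
  natDegree_reflect_le.trans (max_le le_rfl (natDegree_map_le.trans hP))

lemma eval_pstar_of_norm_eq_one {n : ℕ} {P : ℂ[X]} (hP : P.natDegree ≤ n) {z : ℂ}
    (hz : ‖z‖ = 1) : (pstar n P).eval z = z ^ n * conj (P.eval z) := by
  have hzz : z * conj z = 1 := mul_conj_eq_one_of_norm_eq_one hz
  let _ : Invertible (conj z) := ⟨z, hzz, by rw [mul_comm, hzz]⟩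
  have h := eval₂_reflect_mul_pow (RingHom.id ℂ) (conj z) n (P.map (starRingEnd ℂ))
    (natDegree_map_le.trans hP)
  rw [← eval, ← eval, eval_map, eval₂_hom] at h
  rw [← h, mul_left_comm, ← mul_pow, hzz, one_pow, mul_one]
  rfl

section Phase

/-- A lift to `ℝ` of the argument of `P / (η P*)` along the unit circle, for `‖η‖ = 1` and `P*`
taken at the degree of `P`. -/
noncomputable def pstarPhase (η : ℂ) (P : ℂ[X]) (φ : ℝ) : ℝ :=
  2 * P.leadingCoeff.arg - η.arg + ∑ a : P.roots, blaschkePhase a φ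

variable {η : ℂ} {P : ℂ[X]}

lemma eval_eq_eval_pstar_mul_exp_pstarPhase (hη : ‖η‖ = 1) (φ : ℝ) :
    P.eval (Complex.exp (Complex.I * φ)) =
      (C η * pstar P.natDegree P).eval (Complex.exp (Complex.I * φ)) *
        Complex.exp (Complex.I * pstarPhase η P φ) := by
  set z := Complex.exp (Complex.I * φ) with hz
  have heval : P.eval z = P.leadingCoeff * ∏ a : P.roots, (z - a) := by
    rw [(IsAlgClosed.splits P).eval_eq_prod_roots, ← Multiset.map_univ]; rfl
  have hcard : Fintype.card P.roots = P.natDegree := by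
    rw [Multiset.card_coe, (IsAlgClosed.splits P).natDegree_eq_card_roots]
  have hη_eq : η = Complex.exp (Complex.I * η.arg) := by
    simpa [hη, mul_comm] using η.norm_mul_exp_arg_mul_I.symm
  have hpstar : (pstar P.natDegree P).eval z =
      conj P.leadingCoeff * ∏ a : P.roots, z * conj (z - a) := by
    rw [eval_pstar_of_norm_eq_one le_rfl (norm_exp_I_mul_ofReal φ), heval, map_mul,
      map_prod, Finset.prod_mul_distrib, Finset.prod_const, Finset.card_univ, hcard]
    ring
  have hphase : Complex.exp (Complex.I * η.arg) * Complex.exp (Complex.I * pstarPhase η P φ) =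
      Complex.exp (Complex.I * (2 * P.leadingCoeff.arg : ℝ)) *
        ∏ a : P.roots, Complex.exp (Complex.I * blaschkePhase a φ) := by
    rw [← Complex.exp_sum, ← Finset.mul_sum, ← Complex.exp_add, ← Complex.exp_add, pstarPhase]
    push_cast
    ring_nf
  calc P.eval z
      = Complex.exp (Complex.I * (2 * P.leadingCoeff.arg : ℝ)) * conj P.leadingCoeff *
          ∏ a : P.roots, Complex.exp (Complex.I * blaschkePhase a φ) * (z * conj (z - a)) := by
        rw [← eq_exp_two_mul_arg_mul_conj, heval]
        simp_rw [hz, ← exp_sub_eq_exp_blaschkePhase_mul]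
    _ = Complex.exp (Complex.I * η.arg) * Complex.exp (Complex.I * pstarPhase η P φ) *
          (pstar P.natDegree P).eval z := by
        rw [hphase, hpstar, Finset.prod_mul_distrib]; ring
    _ = _ := by rw [← hη_eq, eval_mul, eval_C]; ring

lemma pstarPhase_add_two_pi (η : ℂ) (P : ℂ[X]) (φ : ℝ) :
    pstarPhase η P (φ + 2 * π) = pstarPhase η P φ + 2 * π * P.natDegree := by
  simp only [pstarPhase, blaschkePhase_add_two_pi, Finset.sum_add_distrib, Finset.sum_const,
    Finset.card_univ, Multiset.card_coe, nsmul_eq_mul,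
    (IsAlgClosed.splits P).natDegree_eq_card_roots]
  ring

lemma hasDerivAt_pstarPhase (hroots : ∀ a ∈ P.roots, ‖a‖ < 1) (φ : ℝ) :
    HasDerivAt (pstarPhase η P)
      (∑ a : P.roots, poissonKernel 0 a (Complex.exp (Complex.I * φ))) φ :=
  (HasDerivAt.fun_sum (A := fun a : P.roots ↦ blaschkePhase a) fun a _ ↦
    hasDerivAt_blaschkePhase (hroots a Multiset.coe_mem) φ).const_add _

lemma deriv_pstarPhase_pos (hdeg : 0 < P.natDegree) (hroots : ∀ a ∈ P.roots, ‖a‖ < 1) (φ : ℝ) :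
    0 < deriv (pstarPhase η P) φ := by
  rw [(hasDerivAt_pstarPhase hroots φ).deriv]
  have : Nonempty P.roots := by
    rwa [← Fintype.card_pos_iff, Multiset.card_coe,
      ← (IsAlgClosed.splits P).natDegree_eq_card_roots]
  refine Finset.sum_pos (fun a _ ↦ poissonKernel_zero_pos ?_) Finset.univ_nonempty
  rw [norm_exp_I_mul_ofReal]
  exact hroots a Multiset.coe_mem

end Phase

section Interlacing

/-- The numbers of the two families alternate, beginning with the first family:
`α 0 < β 0 < α 1 < β 1 < ⋯`. -/
def StrictlyInterlaces {n : ℕ} (α β : Fin n → ℝ) : Prop :=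
  (∀ s, α s < β s) ∧ ∀ (s : Fin n) (h : s.val + 1 < n), β s < α ⟨s.val + 1, h⟩

lemma exists_strictMono_preimage {ι α δ : Type*} [Preorder ι] [ConditionallyCompleteLinearOrder α]
    [TopologicalSpace α] [OrderTopology α] [DenselyOrdered α] [LinearOrder δ] [TopologicalSpace δ]
    [OrderClosedTopology δ] {f : α → δ} {a b : α} (hab : a ≤ b) (hf : Monotone f)
    (hc : ContinuousOn f (Set.Icc a b)) {v : ι → δ} (hv : StrictMono v)
    (hvI : ∀ i, v i ∈ Set.Ico (f a) (f b)) :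
    ∃ t : ι → α, StrictMono t ∧ (∀ i, t i ∈ Set.Ico a b) ∧ ∀ i, f (t i) = v i := by
  choose t htI ht using fun i ↦ intermediate_value_Ico hab hc (hvI i)
  refine ⟨t, fun i j hij ↦ hf.reflect_lt ?_, htI, ht⟩
  rw [ht, ht]
  exact hv hij

lemma exp_I_mul_toIcoMod_pi (x : ℝ) :
    Complex.exp (Complex.I * toIcoMod pi_pos x 0) = 1 ∨
      Complex.exp (Complex.I * toIcoMod pi_pos x 0) = -1 := by
  rw [← sq_eq_one_iff, ← Complex.exp_nat_mul, Complex.exp_eq_one_iff]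
  refine ⟨-toIcoDiv pi_pos x 0, ?_⟩
  rw [← self_sub_toIcoDiv_zsmul, zsmul_eq_mul]
  push_cast
  ring

variable {n : ℕ} {ψ : ℝ → ℝ} {a b : ℝ}

lemma exists_strictlyInterlaces_exp_eq (hab : a ≤ b) (hψ : Monotone ψ)
    (hc : ContinuousOn ψ (Set.Icc a b)) (hturn : ψ b = ψ a + 2 * π * n) :
    ∃ α β : Fin n → ℝ, StrictMono α ∧ StrictMono β ∧
      (∀ s, α s ∈ Set.Ico a b) ∧ (∀ s, β s ∈ Set.Ico a b) ∧
      StrictlyInterlaces α β ∧ ∃ ε : ℂ, (ε = 1 ∨ ε = -1) ∧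
        (∀ s, Complex.exp (Complex.I * ψ (α s)) = ε) ∧
        ∀ s, Complex.exp (Complex.I * ψ (β s)) = -ε := by
  set c := toIcoMod pi_pos (ψ a) 0
  obtain ⟨hac, hcπ⟩ : c ∈ Set.Ico (ψ a) (ψ a + π) := toIcoMod_mem_Ico pi_pos _ _
  have hv : StrictMono fun j : Fin (2 * n) ↦ c + (j : ℕ) * π := fun i j hij ↦ by
    have hcast : ((i : ℕ) : ℝ) < (j : ℕ) := by exact_mod_cast hij
    have := mul_lt_mul_of_pos_right hcast pi_pos
    exact add_lt_add_right this c
  have hvI (j : Fin (2 * n)) : c + (j : ℕ) * π ∈ Set.Ico (ψ a) (ψ b) := by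
    have hj : ((j : ℕ) : ℝ) + 1 ≤ 2 * n := by exact_mod_cast j.isLt
    have := pi_pos
    exact ⟨le_add_of_le_of_nonneg hac (by positivity), by nlinarith⟩
  obtain ⟨t, ht, htI, hψt⟩ := exists_strictMono_preimage hab hψ hc hv hvI
  have hexp (j : Fin (2 * n)) :
      Complex.exp (Complex.I * ψ (t j)) = Complex.exp (Complex.I * c) * (-1) ^ (j : ℕ) := by
    rw [hψt, ← Complex.exp_pi_mul_I, ← Complex.exp_nat_mul, ← Complex.exp_add]
    push_cast
    ring_nf
  refine ⟨fun s ↦ t ⟨2 * s, by omega⟩, fun s ↦ t ⟨2 * s + 1, by omega⟩, fun i j hij ↦ ht ?_,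
    fun i j hij ↦ ht ?_, fun s ↦ htI _, fun s ↦ htI _, ⟨fun s ↦ ht ?_, fun s h ↦ ht ?_⟩,
    Complex.exp (Complex.I * c), exp_I_mul_toIcoMod_pi (ψ a), fun s ↦ ?_, fun s ↦ ?_⟩
  any_goals simp only [Fin.lt_def] at *; omega
  · simp [hexp]
  · simp [hexp, pow_succ]

lemma exists_strictlyInterlaces_exp_eq_neg_one_one (hab : a ≤ b) (hψ : Monotone ψ)
    (hc : ContinuousOn ψ (Set.Icc a b)) (hturn : ψ b = ψ a + 2 * π * n) :
    ∃ θp θm : Fin n → ℝ, StrictMono θp ∧ StrictMono θm ∧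
      (∀ s, θp s ∈ Set.Ico a b) ∧ (∀ s, θm s ∈ Set.Ico a b) ∧
      (StrictlyInterlaces θp θm ∨ StrictlyInterlaces θm θp) ∧
      (∀ s, Complex.exp (Complex.I * ψ (θp s)) = -1) ∧
      ∀ s, Complex.exp (Complex.I * ψ (θm s)) = 1 := by
  obtain ⟨α, β, hα, hβ, hαI, hβI, hαβ, ε, rfl | rfl, hεα, hεβ⟩ :=
    exists_strictlyInterlaces_exp_eq hab hψ hc hturn
  · exact ⟨β, α, hβ, hα, hβI, hαI, Or.inr hαβ, hεβ, hεα⟩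
  · exact ⟨α, β, hα, hβ, hαI, hβI, Or.inl hαβ, hεα, by simpa only [neg_neg] using hεβ⟩

end Interlacing

lemma derivative_eval_ne_zero_of_nodup_roots {R : Type*} [CommRing R] [IsDomain R] {Q : R[X]}
    (hQ : Q ≠ 0) (hroots : Q.roots.Nodup) {z : R} (hz : Q.eval z = 0) :
    Q.derivative.eval z ≠ 0 := by
  classical
  intro hz'
  have hmult : 1 < Q.roots.count z := by
    rw [count_roots, one_lt_rootMultiplicity_iff_isRoot hQ]
    exact ⟨hz, hz'⟩
  exact hmult.not_ge (Multiset.nodup_iff_count_le_one.mp hroots z)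

lemma zeros_simple_of_natDegree_le_card {R ι : Type*} [CommRing R] [IsDomain R] [Fintype ι]
    {Q : R[X]} (hQ : Q ≠ 0) (hdeg : Q.natDegree ≤ Fintype.card ι) {z : ι → R}
    (hz : Function.Injective z) (hzero : ∀ i, Q.eval (z i) = 0) :
    (∀ w, Q.eval w = 0 → Q.derivative.eval w ≠ 0) ∧ ∀ w, Q.eval w = 0 ↔ ∃ i, w = z i := by
  have hroots : Q.roots = (Finset.univ.map ⟨z, hz⟩).val :=
    roots_eq_of_natDegree_le_card_of_ne_zero (by simpa using hzero) (by simpa using hdeg) hQ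
  refine ⟨fun w ↦ derivative_eval_ne_zero_of_nodup_roots hQ (hroots ▸ Finset.nodup _), fun w ↦ ?_⟩
  rw [← IsRoot.def, ← mem_roots hQ, hroots]
  simp [eq_comm]

lemma circle_zeros_simple_of_natDegree_le_card {ι : Type*} [Fintype ι] {Q : ℂ[X]} (hQ : Q ≠ 0)
    (hdeg : Q.natDegree ≤ Fintype.card ι) {θ : ι → ℝ}
    (hθ : Function.Injective fun i ↦ Complex.exp (Complex.I * θ i))
    (hzero : ∀ i, Q.eval (Complex.exp (Complex.I * θ i)) = 0) :
    (∀ z, Q.eval z = 0 → ‖z‖ = 1) ∧ (∀ z, Q.eval z = 0 → Q.derivative.eval z ≠ 0) ∧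
      ∀ z, Q.eval z = 0 ↔ ∃ i, z = Complex.exp (Complex.I * θ i) := by
  obtain ⟨hsimple, hiff⟩ := zeros_simple_of_natDegree_le_card hQ hdeg hθ hzero
  refine ⟨fun z hz ↦ ?_, hsimple, hiff⟩
  obtain ⟨i, rfl⟩ := (hiff z).mp hz
  exact norm_exp_I_mul_ofReal _

lemma eval_sub_div_deriv_eval_add {A B : ℂ[X]} {ψ : ℝ → ℝ} {θ : ℝ}
    (hAB : ∀ φ : ℝ, B.eval (Complex.exp (Complex.I * φ)) =
      A.eval (Complex.exp (Complex.I * φ)) * Complex.exp (Complex.I * ψ φ))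
    (hA : A.eval (Complex.exp (Complex.I * θ)) ≠ 0) (hψ : DifferentiableAt ℝ ψ θ)
    (hθ : Complex.exp (Complex.I * ψ θ) = -1) :
    (A - B).eval (Complex.exp (Complex.I * θ)) /
        (2 * Complex.I * deriv (fun φ : ℝ ↦ (B + A).eval (Complex.exp (Complex.I * φ))) θ) =
      ((deriv ψ θ)⁻¹ : ℝ) := by
  set a := A.eval (Complex.exp (Complex.I * θ)) with ha
  have hfactor : (fun φ : ℝ ↦ (B + A).eval (Complex.exp (Complex.I * φ))) = fun φ : ℝ ↦
      A.eval (Complex.exp (Complex.I * φ)) * (1 + Complex.exp (Complex.I * ψ φ)) := by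
    ext φ
    rw [eval_add, hAB]
    ring
  have hderiv : deriv (fun φ : ℝ ↦ (B + A).eval (Complex.exp (Complex.I * φ))) θ =
      -(Complex.I * (deriv ψ θ : ℝ) * a) := by
    have hcircle := (A.hasDerivAt _).comp θ (hasDerivAt_exp_I_mul_ofReal (hasDerivAt_id θ))
    have hprod := hcircle.mul ((hasDerivAt_exp_I_mul_ofReal hψ.hasDerivAt).const_add 1)
    rw [hfactor]
    refine (hprod.congr_deriv ?_).deriv
    rw [hθ]
    simp only [Function.comp_apply, id_eq, ← ha]
    ring
  calc _ = (2 * a) / ((2 * a) * (deriv ψ θ : ℝ)) := by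
        rw [hderiv, eval_sub, hAB, hθ, ← ha]
        congr 1
        · ring
        · linear_combination (-2 * (deriv ψ θ : ℝ) * a) * Complex.I_sq
    _ = _ := by rw [div_mul_cancel_left₀ (by simpa using hA), Complex.ofReal_inv]

theorem stmt10_general {n : ℕ} (hn : 1 ≤ n) {P : ℂ[X]} (hdeg : P.natDegree = n)
    (hzeros : ∀ z : ℂ, P.eval z = 0 → ‖z‖ < 1) {η : ℂ} (hη : ‖η‖ = 1) {Qplus Qminus : ℂ[X]}
    (hQp : Qplus = C η * pstar n P + P) (hQm : Qminus = C η * pstar n P - P) :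
    (∀ z : ℂ, Qplus.eval z = 0 → ‖z‖ = 1) ∧
    (∀ z : ℂ, Qminus.eval z = 0 → ‖z‖ = 1) ∧
    (∀ z : ℂ, Qplus.eval z = 0 → Qplus.derivative.eval z ≠ 0) ∧
    (∀ z : ℂ, Qminus.eval z = 0 → Qminus.derivative.eval z ≠ 0) ∧
    ∃ θp θm : Fin n → ℝ,
      StrictMono θp ∧ StrictMono θm ∧
      (∀ s, θp s ∈ Set.Ico 0 (2 * π)) ∧ (∀ s, θm s ∈ Set.Ico 0 (2 * π)) ∧
      (∀ z : ℂ, Qplus.eval z = 0 ↔ ∃ s, z = Complex.exp (Complex.I * θp s)) ∧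
      (∀ z : ℂ, Qminus.eval z = 0 ↔ ∃ s, z = Complex.exp (Complex.I * θm s)) ∧
      (StrictlyInterlaces θp θm ∨ StrictlyInterlaces θm θp) ∧
      ∀ s : Fin n, ∃ r : ℝ, 0 < r ∧
        Qminus.eval (Complex.exp (Complex.I * θp s)) /
            (2 * Complex.I *
              deriv (fun φ : ℝ ↦ (P + C η * pstar n P).eval
                (Complex.exp (Complex.I * φ))) (θp s)) = (r : ℂ) := by
  have hpos : ∀ φ, 0 < deriv (pstarPhase η P) φ :=
    deriv_pstarPhase_pos (hdeg ▸ hn) fun a ha ↦ hzeros a (isRoot_of_mem_roots ha)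
  have hdiff (φ : ℝ) : DifferentiableAt ℝ (pstarPhase η P) φ :=
    differentiableAt_of_deriv_ne_zero (hpos φ).ne'
  obtain ⟨θp, θm, hθp, hθm, hIp, hIm, hlace, hp, hm⟩ :=
    exists_strictlyInterlaces_exp_eq_neg_one_one two_pi_pos.le
      (strictMono_of_deriv_pos hpos).monotone
      (fun φ _ ↦ (hdiff φ).continuousAt.continuousWithinAt)
      (by simpa [hdeg] using pstarPhase_add_two_pi η P 0)
  have hphase := hdeg ▸ eval_eq_eval_pstar_mul_exp_pstarPhase (P := P) hη
  set A := C η * pstar n P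
  have hA0 (φ : ℝ) : A.eval (Complex.exp (Complex.I * φ)) ≠ 0 := fun h ↦
    (hzeros _ (by rw [hphase, h, zero_mul])).ne (norm_exp_I_mul_ofReal φ)
  have hAdeg : A.natDegree ≤ n := (natDegree_C_mul_le _ _).trans (natDegree_pstar_le hdeg.le)
  have hevalp (φ : ℝ) : Qplus.eval (Complex.exp (Complex.I * φ)) =
      A.eval (Complex.exp (Complex.I * φ)) * (1 + Complex.exp (Complex.I * pstarPhase η P φ)) := by
    rw [hQp, eval_add, hphase, mul_one_add]
  have hevalm (φ : ℝ) : Qminus.eval (Complex.exp (Complex.I * φ)) =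
      A.eval (Complex.exp (Complex.I * φ)) * (1 - Complex.exp (Complex.I * pstarPhase η P φ)) := by
    rw [hQm, eval_sub, hphase, mul_one_sub]
  have hQp0 : Qplus ≠ 0 := by
    rintro rfl
    simpa [hm, hA0] using hevalp (θm ⟨0, hn⟩)
  have hQm0 : Qminus ≠ 0 := by
    rintro rfl
    simpa [hp, hA0] using hevalm (θp ⟨0, hn⟩)
  obtain ⟨hnormp, hsimplep, hiffp⟩ := circle_zeros_simple_of_natDegree_le_card hQp0
    (by simpa [hQp] using natDegree_add_le_of_degree_le hAdeg hdeg.le)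
    (injective_exp_I_mul_ofReal hθp.injective (sub_zero _).le hIp)
    fun s ↦ by rw [hevalp, hp, add_neg_cancel, mul_zero]
  obtain ⟨hnormm, hsimplem, hiffm⟩ := circle_zeros_simple_of_natDegree_le_card hQm0
    (by simpa [hQm] using natDegree_sub_le_of_le hAdeg hdeg.le)
    (injective_exp_I_mul_ofReal hθm.injective (sub_zero _).le hIm)
    fun s ↦ by rw [hevalm, hm, sub_self, mul_zero]
  exact ⟨hnormp, hnormm, hsimplep, hsimplem, θp, θm, hθp, hθm, hIp, hIm, hiffp, hiffm, hlace,
    fun s ↦ ⟨_, inv_pos.mpr (hpos (θp s)),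
      hQm ▸ eval_sub_div_deriv_eval_add hphase (hA0 _) (hdiff _) (hp s)⟩⟩

theorem stmt10
    (n : ℕ) (hn : 1 ≤ n)
    (p : Polynomial ℂ) (hpmonic : p.Monic) (hpdeg : p.natDegree = n - 1)
    (hpzeros : ∀ z : ℂ, p.eval z = 0 → ‖z‖ < 1)
    (η : ℂ) (hη : ‖η‖ = 1)
    (Pn Qplus Qminus : Polynomial ℂ)
    (hPn : Pn = X * p)
    (hQp : Qplus = C η * pstar n Pn + Pn)
    (hQm : Qminus = C η * pstar n Pn - Pn) :
    -- all zeros on the unit circle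
    (∀ z : ℂ, Qplus.eval z = 0 → ‖z‖ = 1) ∧
    (∀ z : ℂ, Qminus.eval z = 0 → ‖z‖ = 1) ∧
    -- all zeros simple
    (∀ z : ℂ, Qplus.eval z = 0 → Qplus.derivative.eval z ≠ 0) ∧
    (∀ z : ℂ, Qminus.eval z = 0 → Qminus.derivative.eval z ≠ 0) ∧
    -- the zeros of `Qminus` and `Qplus` strictly interlace and the `μ s` are positive
    ∃ θp θm : Fin n → ℝ,
      StrictMono θp ∧ StrictMono θm ∧
      (∀ s, θp s ∈ Set.Ico 0 (2 * π)) ∧ (∀ s, θm s ∈ Set.Ico 0 (2 * π)) ∧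
      (∀ z : ℂ, Qplus.eval z = 0 ↔ ∃ s, z = Complex.exp (Complex.I * (θp s : ℂ))) ∧
      (∀ z : ℂ, Qminus.eval z = 0 ↔ ∃ s, z = Complex.exp (Complex.I * (θm s : ℂ))) ∧
      (((∀ s : Fin n, θp s < θm s) ∧
          ∀ (s : Fin n) (h : s.val + 1 < n), θm s < θp ⟨s.val + 1, h⟩) ∨
        ((∀ s : Fin n, θm s < θp s) ∧
          ∀ (s : Fin n) (h : s.val + 1 < n), θp s < θm ⟨s.val + 1, h⟩)) ∧
      ∀ s : Fin n, ∃ r : ℝ, 0 < r ∧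
        Qminus.eval (Complex.exp (Complex.I * (θp s : ℂ))) /
            (2 * Complex.I *
              deriv (fun φ : ℝ => (Pn + C η * pstar n Pn).eval
                (Complex.exp (Complex.I * (φ : ℂ)))) (θp s)) = (r : ℂ) := by
  subst hPn
  exact stmt10_general hn (by simp [natDegree_X_mul hpmonic.ne_zero, hpdeg, Nat.sub_add_cancel hn])
    (by simpa [or_imp, forall_and] using hpzeros) hη hQp hQm
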